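/- arXiv:1210.0659 — 4 statements merged into one kernel-verified Lean document; each statement's English description precedes it below -/
import Mathlib

section
/- Let H := [[1, 0], [−cγλ, 1]] (a 2×2 complex matrix). Then for all z ∈ ℝ, F_q(z)·H = e^{−cγλz}·H·F_p(z); equivalently, F_q(z) = e^{−cγλz}·H·F_p(z)·H⁻¹ since det H = 1. In particular, the monodromy matrices satisfy M_q = e^{−cγλT}·H·M_p·H⁻¹. -/
noncomputable section

/-- The coefficient matrix of the first-order system equivalent to problem (P). -/
def Amatₚ (c γ : ℝ) (f : ℝ → ℝ) (lam : ℂ) (z : ℝ) : Matrix (Fin 2) (Fin 2) ℂ :=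
  !![0, 1; -(γ : ℂ) * (lam ^ 2 + (Real.cos (f z) : ℂ)), 2 * (c : ℂ) * (γ : ℂ) * lam]

/-- The coefficient matrix of the first-order system equivalent to Hill's equation (Q). -/
def Amat_q (γ : ℝ) (f : ℝ → ℝ) (μ : ℂ) (z : ℝ) : Matrix (Fin 2) (Fin 2) ℂ :=
  !![0, 1; μ - (γ : ℂ) * (Real.cos (f z) : ℂ), 0]

/-- `F` is the fundamental solution matrix of `Y' = A(z)Y`: `F' = A·F` (entrywise)
and `F(0) = I`. -/
def IsFundamental (A F : ℝ → Matrix (Fin 2) (Fin 2) ℂ) : Prop :=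
  (∀ (i j : Fin 2) (z : ℝ), HasDerivAt (fun t : ℝ => F t i j) ((A z * F z) i j) z) ∧
    F 0 = 1

/-- The matrix `H = [[1,0],[-cγλ,1]]` conjugating the two systems. -/
def Hmat (c γ : ℝ) (lam : ℂ) : Matrix (Fin 2) (Fin 2) ℂ :=
  !![1, 0; -(c : ℂ) * (γ : ℂ) * lam, 1]

/-! Completing the square, `γ²λ² = (cγλ)² - γλ²`, gives the gauge identity `A_q H = H A_p - cγλ H`,
so that `Y(z) = e^{-cγλz} H F_p(z)` solves `Y' = A_q Y` with `Y(0) = H`. It remains to see that `Y`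
is `F_q H`. For `2 × 2` matrices the adjugate is linear, and it negates traceless matrices; as `A_q`
is traceless, this makes `adj(F_q) Y` constant for every solution `Y`. Taking `Y = F_q` shows that
`adj(F_q)` is the inverse of `F_q`, and therefore `Y(z) = F_q(z) Y(0)`. -/

lemma adjugate_fin_two_eq_neg_of_trace_eq_zero {R : Type*} [CommRing R]
    {M : Matrix (Fin 2) (Fin 2) R} (hM : M.trace = 0) : M.adjugate = -M := by
  rw [Matrix.trace_fin_two] at hM
  rw [Matrix.adjugate_fin_two, ← Matrix.ext_iff]
  simp [Fin.forall_fin_two, eq_neg_of_add_eq_zero_left hM]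

lemma hasDerivAt_matrix_iff {𝕜 E m n : Type*} [NontriviallyNormedField 𝕜] [NormedAddCommGroup E]
    [NormedSpace 𝕜 E] [Finite n] {M : 𝕜 → Matrix m n E} {M' : Matrix m n E} {z : 𝕜} :
    HasDerivAt M M' z ↔ ∀ i j, HasDerivAt (fun t => M t i j) (M' i j) z :=
  have := Fintype.ofFinite n
  hasDerivAt_pi.trans (forall_congr' fun _ => hasDerivAt_pi)

section MatrixDerivative

open scoped Matrix.Norms.Operator

variable {𝕜 R : Type*} [NontriviallyNormedField 𝕜] [NormedCommRing R] [NormedAlgebra 𝕜 R] {z : 𝕜}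

lemma hasDerivAt_adjugate_fin_two {M : 𝕜 → Matrix (Fin 2) (Fin 2) R}
    {M' : Matrix (Fin 2) (Fin 2) R} (hM : HasDerivAt M M' z) :
    HasDerivAt (fun t => (M t).adjugate) M'.adjugate z := by
  have hentry := hasDerivAt_matrix_iff.mp hM
  simp only [Matrix.adjugate_fin_two]
  refine hasDerivAt_matrix_iff.mpr fun i j => ?_
  fin_cases i <;> fin_cases j
  · exact hentry 1 1
  · exact (hentry 0 1).neg
  · exact (hentry 1 0).neg
  · exact hentry 0 0

lemma hasDerivAt_smul_mul_of_gauge {n : Type*} [Fintype n] {F : 𝕜 → Matrix n n R}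
    {g : 𝕜 → R} {A B H : Matrix n n R} {a : R}
    (hF : HasDerivAt F (A * F z) z) (hg : HasDerivAt g (a * g z) z)
    (hgauge : B * H = H * A + a • H) :
    HasDerivAt (fun t => g t • (H * F t)) (B * (g z • (H * F z))) z := by
  classical
  refine (hg.smul (hF.const_mul H)).congr_deriv ?_
  rw [Matrix.mul_smul, ← Matrix.mul_assoc B, hgauge]
  simp only [Matrix.add_mul, Matrix.smul_mul, Matrix.mul_assoc, smul_add, smul_smul, mul_comm]

end MatrixDerivative

section TracelessSystem

open scoped Matrix.Norms.Operator

variable {𝕜 R : Type*} [RCLike 𝕜] [NormedCommRing R] [NormedAlgebra 𝕜 R]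
  {B G Y : 𝕜 → Matrix (Fin 2) (Fin 2) R}

lemma adjugate_mul_eq_adjugate_mul_of_trace_eq_zero (hB : ∀ z, (B z).trace = 0)
    (hG : ∀ z, HasDerivAt G (B z * G z) z) (hY : ∀ z, HasDerivAt Y (B z * Y z) z)
    (z w : 𝕜) :
    (G z).adjugate * Y z = (G w).adjugate * Y w := by
  have hderiv (t : 𝕜) : HasDerivAt (fun s => (G s).adjugate * Y s) 0 t := by
    refine ((hasDerivAt_adjugate_fin_two (hG t)).mul (hY t)).congr_deriv ?_
    rw [Matrix.adjugate_mul_distrib, adjugate_fin_two_eq_neg_of_trace_eq_zero (hB t)]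
    noncomm_ring
  exact is_const_of_deriv_eq_zero (fun t => (hderiv t).differentiableAt)
    (fun t => (hderiv t).deriv) z w

lemma eq_mul_of_hasDerivAt_of_trace_eq_zero (hB : ∀ z, (B z).trace = 0)
    (hG : ∀ z, HasDerivAt G (B z * G z) z) {z₀ : 𝕜} (hG₀ : G z₀ = 1)
    (hY : ∀ z, HasDerivAt Y (B z * Y z) z) (z : 𝕜) : Y z = G z * Y z₀ := by
  have hGG : (G z).adjugate * G z = 1 := by
    simpa [hG₀] using adjugate_mul_eq_adjugate_mul_of_trace_eq_zero hB hG hG z z₀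
  have hGY : (G z).adjugate * Y z = Y z₀ := by
    simpa [hG₀] using adjugate_mul_eq_adjugate_mul_of_trace_eq_zero hB hG hY z z₀
  rw [← hGY, ← Matrix.mul_assoc, mul_eq_one_comm.mp hGG, Matrix.one_mul]

end TracelessSystem

lemma hasDerivAt_cexp_const_mul_ofReal (a : ℂ) (z : ℝ) :
    HasDerivAt (fun t : ℝ => Complex.exp (a * t)) (a * Complex.exp (a * z)) z := by
  simpa [mul_comm] using (hasDerivAt_id (z : ℂ)).comp_ofReal.const_mul a |>.cexp

lemma IsFundamental.hasDerivAt {A F : ℝ → Matrix (Fin 2) (Fin 2) ℂ} (hF : IsFundamental A F)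
    (z : ℝ) : HasDerivAt F (A z * F z) z :=
  hasDerivAt_matrix_iff.mpr fun i j => hF.1 i j z

theorem IsFundamental.mul_eq_cexp_smul_mul {A B F G : ℝ → Matrix (Fin 2) (Fin 2) ℂ}
    {H : Matrix (Fin 2) (Fin 2) ℂ} {a : ℂ} (hF : IsFundamental A F) (hG : IsFundamental B G)
    (hB : ∀ z, (B z).trace = 0) (hgauge : ∀ z, B z * H = H * A z + a • H) (z : ℝ) :
    G z * H = Complex.exp (a * z) • (H * F z) := by
  let Y (t : ℝ) := Complex.exp (a * t) • (H * F t)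
  have hY (t : ℝ) : HasDerivAt Y (B t * Y t) t :=
    hasDerivAt_smul_mul_of_gauge (hF.hasDerivAt t) (hasDerivAt_cexp_const_mul_ofReal a t) (hgauge t)
  have hY₀ : Y 0 = H := by simp [Y, hF.2]
  simpa only [hY₀] using (eq_mul_of_hasDerivAt_of_trace_eq_zero hB hG.hasDerivAt hG.2 hY z).symm

lemma trace_Amat_q (γ : ℝ) (f : ℝ → ℝ) (μ : ℂ) (z : ℝ) : (Amat_q γ f μ z).trace = 0 := by
  simp [Amat_q, Matrix.trace_fin_two]

lemma det_Hmat (c γ : ℝ) (lam : ℂ) : (Hmat c γ lam).det = 1 := by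
  simp [Hmat, Matrix.det_fin_two]

lemma Amat_q_mul_Hmat {c γ : ℝ} (hγ : γ * (c ^ 2 - 1) = 1) (f : ℝ → ℝ) (lam : ℂ) (z : ℝ) :
    Amat_q γ f ((γ : ℂ) ^ 2 * lam ^ 2) z * Hmat c γ lam =
      Hmat c γ lam * Amatₚ c γ f lam z + (-(c : ℂ) * γ * lam) • Hmat c γ lam := by
  have hμ : (γ : ℂ) ^ 2 * lam ^ 2 = (c * γ * lam) ^ 2 - γ * lam ^ 2 := by
    have hγ' : (γ : ℂ) * ((c : ℂ) ^ 2 - 1) = 1 := mod_cast hγ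
    linear_combination -γ * lam ^ 2 * hγ'
  rw [hμ]
  ext i j
  fin_cases i <;> fin_cases j <;>
    simp [Amat_q, Amatₚ, Hmat, Matrix.mul_apply, Fin.sum_univ_two] <;> ring

theorem stmt5_general {c γ : ℝ} (hc : c ^ 2 ≠ 1) (hγ : γ = 1 / (c ^ 2 - 1)) {f : ℝ → ℝ} {lam : ℂ}
    {Fp Fq : ℝ → Matrix (Fin 2) (Fin 2) ℂ} (hFp : IsFundamental (Amatₚ c γ f lam) Fp)
    (hFq : IsFundamental (Amat_q γ f ((γ : ℂ) ^ 2 * lam ^ 2)) Fq) :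
    (∀ z : ℝ, Fq z * Hmat c γ lam =
      Complex.exp (-(c : ℂ) * (γ : ℂ) * lam * (z : ℂ)) • (Hmat c γ lam * Fp z)) ∧
    ∀ z : ℝ, Fq z =
      Complex.exp (-(c : ℂ) * (γ : ℂ) * lam * (z : ℂ)) •
        (Hmat c γ lam * Fp z * (Hmat c γ lam)⁻¹) := by
  have hγc : γ * (c ^ 2 - 1) = 1 := by
    rw [hγ, one_div_mul_cancel (sub_ne_zero.mpr hc)]
  have hconj := hFp.mul_eq_cexp_smul_mul hFq (trace_Amat_q γ f _) (Amat_q_mul_Hmat hγc f lam)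
  refine ⟨hconj, fun z => ?_⟩
  have hdet : IsUnit (Hmat c γ lam).det := by simp [det_Hmat]
  rw [← Matrix.smul_mul, ← hconj z, Matrix.mul_nonsing_inv_cancel_right _ _ hdet]

/-- The fundamental solutions of (P) and (Q) are exponentially conjugate, and hence
so are the monodromy matrices: `M_q = e^{-cγλT}·H·M_p·H⁻¹`. -/
theorem stmt5 (c γ T : ℝ) (hc : c ^ 2 ≠ 1) (hγ : γ = 1 / (c ^ 2 - 1))
    (f : ℝ → ℝ) (hf : ContDiff ℝ 2 f)
    (hpend : ∀ z : ℝ, (c ^ 2 - 1) * deriv (deriv f) z + Real.sin (f z) = 0)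
    (hT : 0 < T) (hper : ∀ z : ℝ, ∃ k : ℤ, f (z + T) = f z + 2 * Real.pi * k)
    (hmin : ∀ S : ℝ, 0 < S → (∀ z : ℝ, ∃ k : ℤ, f (z + S) = f z + 2 * Real.pi * k) → T ≤ S)
    (lam : ℂ) (Fp Fq : ℝ → Matrix (Fin 2) (Fin 2) ℂ)
    (hFp : IsFundamental (Amatₚ c γ f lam) Fp)
    (hFq : IsFundamental (Amat_q γ f ((γ : ℂ) ^ 2 * lam ^ 2)) Fq) :
    (∀ z : ℝ, Fq z * Hmat c γ lam =
      Complex.exp (-(c : ℂ) * (γ : ℂ) * lam * (z : ℂ)) • (Hmat c γ lam * Fp z)) ∧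
    (∀ z : ℝ, Fq z =
      Complex.exp (-(c : ℂ) * (γ : ℂ) * lam * (z : ℂ)) •
        (Hmat c γ lam * Fp z * (Hmat c γ lam)⁻¹)) ∧
    Fq T = Complex.exp (-(c : ℂ) * (γ : ℂ) * lam * (T : ℂ)) •
        (Hmat c γ lam * Fp T * (Hmat c γ lam)⁻¹) := by
  have h := stmt5_general hc hγ hFp hFq
  exact ⟨h.1, h.2, h.2 T⟩
end
end

section
/- A complex number ρ is an eigenvalue of the monodromy matrix M_p (a Floquet multiplier of problem (P)) if and only if e^{−cγλT}·ρ is an eigenvalue of the monodromy matrix M_q (a Floquet multiplier of problem (Q)). -/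
noncomputable section

/-- `ρ` is an eigenvalue of the 2×2 complex matrix `M`. -/
def IsEigenvalueOf (M : Matrix (Fin 2) (Fin 2) ℂ) (ρ : ℂ) : Prop :=
  ∃ v : Fin 2 → ℂ, v ≠ 0 ∧ M.mulVec v = ρ • v

/-! Put `a = cγλ` and `b = -γ(λ² + cos f)`. The substitution `q = exp (-a z) p` removes the
first-order term of `p'' = 2a p' + b p` and leaves `q'' = (a² + b) q`, where `a² + b = μ - γ cos f`
because `γ(c² - 1) = 1`. On phase space it sends `(p, p')` to `exp (-a z) S (p, p')` with the
constant shear `S = [[1, 0], [-a, 1]]`, so `exp (-a z) S F_p(z) S⁻¹` is a fundamental matrix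
of (Q). The coefficient matrix of (Q) has trace zero, so its Wronskians are constant and its
fundamental matrix is unique. Thus `M_q` is conjugate to `exp (-a T) M_p`. -/

theorem isEigenvalueOf_iff_mem_spectrum {M : Matrix (Fin 2) (Fin 2) ℂ} {ρ : ℂ} :
    IsEigenvalueOf M ρ ↔ ρ ∈ spectrum ℂ M := by
  rw [← Matrix.spectrum_toLin', ← Module.End.hasEigenvalue_iff_mem_spectrum]
  simp only [IsEigenvalueOf, Module.End.HasEigenvalue, Module.End.HasUnifEigenvalue,
    Submodule.ne_bot_iff, Module.End.mem_eigenspace_iff, Matrix.toLin'_apply, and_comm]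

theorem isEigenvalueOf_smul_conj_iff {M : Matrix (Fin 2) (Fin 2) ℂ} {e ρ : ℂ} (he : e ≠ 0)
    (S : (Matrix (Fin 2) (Fin 2) ℂ)ˣ) :
    IsEigenvalueOf (e • (S * M * S⁻¹)) (e * ρ) ↔ IsEigenvalueOf M ρ := by
  rw [isEigenvalueOf_iff_mem_spectrum, isEigenvalueOf_iff_mem_spectrum,
    ← spectrum.units_conjugate (a := M) (u := S)]
  exact spectrum.smul_mem_smul_iff (r := Units.mk0 e he)

theorem adjugate_eq_neg_of_trace_eq_zero {R : Type*} [CommRing R] {A : Matrix (Fin 2) (Fin 2) R}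
    (hA : A.trace = 0) : A.adjugate = -A := by
  rw [Matrix.trace_fin_two] at hA
  ext i j
  rw [Matrix.adjugate_fin_two]
  fin_cases i <;> fin_cases j
  · exact eq_neg_of_add_eq_zero_right hA
  · rfl
  · rfl
  · exact eq_neg_of_add_eq_zero_left hA

theorem hasDerivAt_matrix {m n 𝕜 E : Type*} [Finite m] [Finite n] [NontriviallyNormedField 𝕜]
    [NormedAddCommGroup E] [NormedSpace 𝕜 E] {F : 𝕜 → Matrix m n E} {F' : Matrix m n E} {z : 𝕜} :
    HasDerivAt F F' z ↔ ∀ i j, HasDerivAt (fun t => F t i j) (F' i j) z := by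
  cases nonempty_fintype m
  cases nonempty_fintype n
  exact hasDerivAt_pi.trans (forall_congr' fun _ => hasDerivAt_pi)

theorem hasDerivAt_adjugate_fin_two_s6 {𝕜 R : Type*} [NontriviallyNormedField 𝕜] [NormedCommRing R]
    [NormedAlgebra 𝕜 R] {F : 𝕜 → Matrix (Fin 2) (Fin 2) R} {F' : Matrix (Fin 2) (Fin 2) R} {z : 𝕜}
    (hF : HasDerivAt F F' z) : HasDerivAt (fun t => (F t).adjugate) F'.adjugate z := by
  rw [hasDerivAt_matrix] at hF ⊢
  simp only [Matrix.adjugate_fin_two]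
  intro i j
  fin_cases i <;> fin_cases j
  · exact hF 1 1
  · exact (hF 0 1).neg
  · exact (hF 1 0).neg
  · exact hF 0 0

theorem isFundamental_iff_hasDerivAt {A F : ℝ → Matrix (Fin 2) (Fin 2) ℂ} :
    IsFundamental A F ↔ (∀ z, HasDerivAt F (A z * F z) z) ∧ F 0 = 1 := by
  simp only [IsFundamental, hasDerivAt_matrix]
  exact and_congr_left' ⟨fun h z i j => h i j z, fun h i j z => h z i j⟩

namespace IsFundamental

open scoped Matrix.Norms.Operator

variable {A F G : ℝ → Matrix (Fin 2) (Fin 2) ℂ}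

theorem conj (hF : IsFundamental A F) (S : (Matrix (Fin 2) (Fin 2) ℂ)ˣ) :
    IsFundamental (fun z => S * A z * S⁻¹) (fun z => S * F z * S⁻¹) := by
  rw [isFundamental_iff_hasDerivAt] at hF ⊢
  refine ⟨fun z => ?_, by simp [hF.2]⟩
  refine (((hF.1 z).const_mul (S : Matrix (Fin 2) (Fin 2) ℂ)).mul_const _).congr_deriv ?_
  simp only [mul_assoc, Units.inv_mul_cancel_left]

theorem exp_smul (hF : IsFundamental A F) (a : ℂ) :
    IsFundamental (fun z => A z + a • 1) (fun z => Complex.exp (a * z) • F z) := by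
  rw [isFundamental_iff_hasDerivAt] at hF ⊢
  refine ⟨fun z => ?_, by simp [hF.2]⟩
  have hexp : HasDerivAt (fun t : ℝ => Complex.exp (a * t)) (Complex.exp (a * z) * a) z := by
    simpa using (Complex.ofRealCLM.hasDerivAt.const_mul a).cexp
  refine (hexp.smul (hF.1 z)).congr_deriv ?_
  simp only [add_mul, smul_mul_assoc, one_mul, mul_smul_comm, smul_add, smul_smul]

-- The entries of `adj F * G` are, up to sign, Wronskians of a column of `F` and a column of `G`.
theorem adjugate_mul_eq_one (hA : ∀ z, (A z).trace = 0) (hF : IsFundamental A F)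
    (hG : IsFundamental A G) (z : ℝ) : (F z).adjugate * G z = 1 := by
  rw [isFundamental_iff_hasDerivAt] at hF hG
  have hderiv (z : ℝ) : HasDerivAt (fun t => (F t).adjugate * G t) 0 z := by
    refine ((hasDerivAt_adjugate_fin_two_s6 (hF.1 z)).mul (hG.1 z)).congr_deriv ?_
    rw [Matrix.adjugate_mul_distrib, adjugate_eq_neg_of_trace_eq_zero (hA z),
      mul_neg, neg_mul, mul_assoc, neg_add_cancel]
  have hconst := is_const_of_deriv_eq_zero (fun z => (hderiv z).differentiableAt)
    (fun z => (hderiv z).deriv) z 0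
  simpa [hF.2, hG.2] using hconst

theorem eq_of_trace_eq_zero (hA : ∀ z, (A z).trace = 0) (hF : IsFundamental A F)
    (hG : IsFundamental A G) : F = G := by
  funext z
  have hleft : F z * (F z).adjugate = 1 := mul_eq_one_comm.mp (hF.adjugate_mul_eq_one hA hF z)
  exact left_inv_eq_right_inv hleft (hF.adjugate_mul_eq_one hA hG z)

end IsFundamental

section Companion

variable {R : Type*} [CommRing R]

/-- The system matrix `[[0, 1], [b, d]]` of the scalar equation `p'' = d p' + b p` in the
coordinates `(p, p')`. -/
def companion (b d : R) : Matrix (Fin 2) (Fin 2) R :=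
  !![0, 1; b, d]

/-- The shear `(p, p') ↦ (p, p' - a p)`, through which the substitution `q = exp (-a z) p` acts on
phase space up to the factor `exp (-a z)`. -/
def shear (a : R) : (Matrix (Fin 2) (Fin 2) R)ˣ where
  val := !![1, 0; -a, 1]
  inv := !![1, 0; a, 1]
  val_inv := by simp [Matrix.one_fin_two]
  inv_val := by simp [Matrix.one_fin_two]

theorem shear_conj_companion (a b : R) :
    shear a * companion b (2 * a) * (shear a)⁻¹ + (-a) • 1 = companion (a ^ 2 + b) 0 := by
  change !![1, 0; -a, 1] * !![0, 1; b, 2 * a] * !![1, 0; a, 1] + (-a) • 1 = !![0, 1; a ^ 2 + b, 0]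
  ext i j
  fin_cases i <;> fin_cases j <;> simp <;> ring

end Companion

theorem companion_fundamental_eq_exp_smul_shear_conj {a : ℂ} {b : ℝ → ℂ}
    {F G : ℝ → Matrix (Fin 2) (Fin 2) ℂ}
    (hF : IsFundamental (fun z => companion (b z) (2 * a)) F)
    (hG : IsFundamental (fun z => companion (a ^ 2 + b z) 0) G) (z : ℝ) :
    G z = Complex.exp (-a * z) • (shear a * F z * (shear a)⁻¹) := by
  have hgauge := (hF.conj (shear a)).exp_smul (-a)
  simp only [shear_conj_companion] at hgauge
  exact congrFun (hG.eq_of_trace_eq_zero (fun z => by simp [companion]) hgauge) z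

theorem stmt6_general {a : ℂ} {b : ℝ → ℂ} {F G : ℝ → Matrix (Fin 2) (Fin 2) ℂ}
    (hF : IsFundamental (fun z => companion (b z) (2 * a)) F)
    (hG : IsFundamental (fun z => companion (a ^ 2 + b z) 0) G) (z : ℝ) (ρ : ℂ) :
    IsEigenvalueOf (F z) ρ ↔ IsEigenvalueOf (G z) (Complex.exp (-a * z) * ρ) := by
  rw [companion_fundamental_eq_exp_smul_shear_conj hF hG,
    isEigenvalueOf_smul_conj_iff (Complex.exp_ne_zero _)]

theorem Amatₚ_eq_companion (c γ : ℝ) (f : ℝ → ℝ) (lam : ℂ) :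
    Amatₚ c γ f lam =
      fun z => companion (-γ * (lam ^ 2 + Real.cos (f z))) (2 * (c * γ * lam)) := by
  funext z
  simp only [Amatₚ, companion, mul_assoc]

theorem Amat_q_eq_companion {c γ : ℝ} (hc : c ^ 2 ≠ 1) (hγ : γ = 1 / (c ^ 2 - 1)) (f : ℝ → ℝ)
    (lam : ℂ) :
    Amat_q γ f (γ ^ 2 * lam ^ 2) =
      fun z => companion ((c * γ * lam) ^ 2 + -γ * (lam ^ 2 + Real.cos (f z))) 0 := by
  have hcγ : ((c : ℂ) ^ 2 - 1) * γ = 1 := by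
    have : (c ^ 2 - 1) * γ = 1 := by rw [hγ, mul_one_div_cancel (sub_ne_zero.mpr hc)]
    exact_mod_cast this
  funext z
  have hcoeff : (γ : ℂ) ^ 2 * lam ^ 2 - γ * Real.cos (f z) =
      (c * γ * lam) ^ 2 + -γ * (lam ^ 2 + Real.cos (f z)) := by
    linear_combination -(γ : ℂ) * lam ^ 2 * hcγ
  rw [Amat_q, companion, hcoeff]

/-- `ρ` is a Floquet multiplier of (P) iff `e^{-cγλT}ρ` is a Floquet multiplier of (Q). -/
theorem stmt6 (c γ T : ℝ) (hc : c ^ 2 ≠ 1) (hγ : γ = 1 / (c ^ 2 - 1))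
    (f : ℝ → ℝ) (hf : ContDiff ℝ 2 f)
    (hpend : ∀ z : ℝ, (c ^ 2 - 1) * deriv (deriv f) z + Real.sin (f z) = 0)
    (hT : 0 < T) (hper : ∀ z : ℝ, ∃ k : ℤ, f (z + T) = f z + 2 * Real.pi * k)
    (hmin : ∀ S : ℝ, 0 < S → (∀ z : ℝ, ∃ k : ℤ, f (z + S) = f z + 2 * Real.pi * k) → T ≤ S)
    (lam : ℂ) (Fp Fq : ℝ → Matrix (Fin 2) (Fin 2) ℂ)
    (hFp : IsFundamental (Amatₚ c γ f lam) Fp)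
    (hFq : IsFundamental (Amat_q γ f ((γ : ℂ) ^ 2 * lam ^ 2)) Fq) :
    ∀ ρ : ℂ, IsEigenvalueOf (Fp T) ρ ↔
      IsEigenvalueOf (Fq T) (Complex.exp (-(c : ℂ) * (γ : ℂ) * lam * (T : ℂ)) * ρ) := by
  simpa only [neg_mul] using stmt6_general (Amatₚ_eq_companion c γ f lam ▸ hFp)
    (Amat_q_eq_companion hc hγ f lam ▸ hFq) T
end
end

section
/- Let f be a librational wave (0 < E < 2, c² ≠ 1) with fundamental period T > 0, normalized so that sin(f(0)) = 0 and f'(0) > 0. For each μ ∈ ℝ let F_μ : ℝ → Matrix (Fin 2) (Fin 2) ℝ be the fundamental solution of the system Y'(z) = [[0, 1], [μ − γ cos(f(z)), 0]]·Y(z) with F_μ(0) = I, and define the Hill discriminant Δ_q(μ) := tr F_μ(T). If the function μ ↦ Δ_q(μ) has derivative d at μ = 0, then d < 0. (Equivalently: 0 = μ₁⁽⁰⁾ > μ₂⁽⁰⁾, i.e. μ = 0 is the second largest periodic eigenvalue of Hill's equation and is simple as a periodic eigenvalue.) -/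
noncomputable section

/-- `F` is the fundamental solution matrix of the real system `Y' = A(z)Y`. -/
def IsFundamentalR (A F : ℝ → Matrix (Fin 2) (Fin 2) ℝ) : Prop :=
  (∀ (i j : Fin 2) (z : ℝ), HasDerivAt (fun t : ℝ => F t i j) ((A z * F z) i j) z) ∧
    F 0 = 1

/-!
The Lagrange identity for Wronskians turns the increment of the discriminant of
`y'' = (μ - Q) y` into an exact integral formula, whence `Δ` is differentiable in `μ`. At `μ = 0`
the velocity of the wave is a periodic solution, so the monodromy matrix is `[[1, β], [0, 1]]` and
`Δ'(0) = β ∫ u²`, with `u` the normalized velocity.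

To find the sign of `β`, measure the wave from `f 0`: this gives a pendulum `g'' = -ω sin g` with
`ω > 0` and `g < π`. If `s` is its half period, then `cos g` is `s`-periodic and the monodromy
over `s` is `[[-1, w], [0, -1]]`. Now `g` itself solves `g'' = -(ω sinc g) g`, and `cos < sinc` on
`(0, π)`, so Sturm comparison with `g > 0` on `(0, s)` gives `w > 0`. Squaring, `β` is a positive
multiple of `-2 w`.
-/

open Set Filter Topology Function

/-! ### First zeros -/

lemma nonpos_of_hasDerivAt_of_pos_left {g : ℝ → ℝ} {v a s : ℝ} (hg : HasDerivAt g v s)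
    (has : a < s) (hgs : g s = 0) (hpos : ∀ z ∈ Ioo a s, 0 < g z) : v ≤ 0 := by
  by_contra! hv
  have hsign := eventually_nhdsWithin_sign_eq_of_deriv_pos (hg.deriv.symm ▸ hv) hgs
  obtain ⟨z, hz, hzI⟩ := ((hsign.filter_mono nhdsWithin_le_nhds).and (Ioo_mem_nhdsLT has)).exists
  rw [sign_pos (hpos z hzI), sign_neg (sub_neg.2 hzI.2)] at hz
  exact absurd hz (by decide)

lemma eventually_nhdsGT_pos_of_hasDerivAt {g : ℝ → ℝ} {v a : ℝ} (hg : HasDerivAt g v a)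
    (hga : g a = 0) (hv : 0 < v) : ∀ᶠ z in 𝓝[>] a, 0 < g z := by
  have hsign := eventually_nhdsWithin_sign_eq_of_deriv_pos (hg.deriv.symm ▸ hv) hga
  filter_upwards [nhdsWithin_le_nhds hsign, self_mem_nhdsWithin] with z hz haz
  exact sign_eq_one_iff.1 (hz.trans (sign_pos (sub_pos.2 haz)))

lemma exists_first_zero {g g' : ℝ → ℝ} {a b : ℝ} (hg : ∀ z, HasDerivAt g (g' z) z)
    (hga : g a = 0) (hg'a : 0 < g' a) (hab : a < b) (hgb : g b ≤ 0) :
    ∃ s ∈ Ioc a b, g s = 0 ∧ g' s ≤ 0 ∧ ∀ z ∈ Ioo a s, 0 < g z := by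
  have hcont : Continuous g := continuous_iff_continuousAt.2 fun z => (hg z).continuousAt
  obtain ⟨δ, haδ, hδ⟩ := mem_nhdsGT_iff_exists_Ioo_subset.1
    (eventually_nhdsGT_pos_of_hasDerivAt (hg a) hga hg'a)
  have hδb : δ ≤ b := by
    by_contra! hbδ
    exact (hδ ⟨hab, hbδ⟩ : 0 < g b).not_ge hgb
  obtain ⟨s, ⟨⟨hδs, hsb⟩, hgs⟩, hleast⟩ :=
    (isCompact_Icc.inter_right (isClosed_le hcont continuous_const)).exists_isLeast
      (⟨b, ⟨hδb, le_rfl⟩, hgb⟩ : (Icc δ b ∩ {z | g z ≤ 0}).Nonempty)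
  have has : a < s := lt_of_lt_of_le haδ hδs
  have hpos : ∀ z ∈ Ioo a s, 0 < g z := by
    rintro z ⟨haz, hzs⟩
    by_contra! hgz
    rcases lt_or_ge z δ with hzδ | hδz
    · exact (hδ ⟨haz, hzδ⟩ : 0 < g z).not_ge hgz
    · exact hzs.not_ge (hleast ⟨⟨hδz, hzs.le.trans hsb⟩, hgz⟩)
  have hgs0 : g s = 0 := le_antisymm hgs <|
    ge_of_tendsto ((hcont.tendsto s).mono_left nhdsWithin_le_nhds)
      (mem_of_superset (Ioo_mem_nhdsLT has) fun z hz => (hpos z hz).le)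
  exact ⟨s, ⟨has, hsb⟩, hgs0, nonpos_of_hasDerivAt_of_pos_left (hg s) has hgs0 hpos, hpos⟩

/-! ### Solutions of Hill's equation -/

/-- `y` solves Hill's equation `y'' = V y` on the whole line, with derivative `y'`. Carrying the
derivative as data lets the two rows of a fundamental matrix serve as a solution. -/
structure IsHillSolution (V y y' : ℝ → ℝ) : Prop where
  hasDerivAt : ∀ z, HasDerivAt y (y' z) z
  hasDerivAt_deriv : ∀ z, HasDerivAt y' (V z * y z) z

namespace IsHillSolution

variable {U V x x' y y' : ℝ → ℝ}

lemma continuous (hy : IsHillSolution V y y') : Continuous y :=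
  continuous_iff_continuousAt.2 fun z => (hy.hasDerivAt z).continuousAt

lemma comp_add_const (hy : IsHillSolution V y y') (a : ℝ) :
    IsHillSolution (fun z => V (z + a)) (fun z => y (z + a)) (fun z => y' (z + a)) where
  hasDerivAt z := (hy.hasDerivAt (z + a)).comp_add_const z a
  hasDerivAt_deriv z := (hy.hasDerivAt_deriv (z + a)).comp_add_const z a

lemma hasDerivAt_wronskian (hx : IsHillSolution U x x') (hy : IsHillSolution V y y') (z : ℝ) :
    HasDerivAt (fun t => x' t * y t - x t * y' t) ((U z - V z) * (x z * y z)) z :=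
  (((hx.hasDerivAt_deriv z).mul (hy.hasDerivAt z)).sub
    ((hx.hasDerivAt z).mul (hy.hasDerivAt_deriv z))).congr_deriv (by ring)

lemma wronskian_eq (hx : IsHillSolution V x x') (hy : IsHillSolution V y y') (z w : ℝ) :
    x' z * y z - x z * y' z = x' w * y w - x w * y' w := by
  have hderiv := fun t => (hx.hasDerivAt_wronskian hy t).congr_deriv (g' := 0) (by ring)
  exact is_const_of_deriv_eq_zero (fun t => (hderiv t).differentiableAt)
    (fun t => (hderiv t).deriv) z w

lemma wronskian_sub_wronskian {Q : ℝ → ℝ} {μ ν : ℝ}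
    (hx : IsHillSolution (fun z => ν - Q z) x x') (hy : IsHillSolution (fun z => μ - Q z) y y')
    (a b : ℝ) :
    (x' b * y b - x b * y' b) - (x' a * y a - x a * y' a) =
      (ν - μ) * ∫ z in a..b, x z * y z := by
  have hderiv (z : ℝ) : HasDerivAt (fun t => x' t * y t - x t * y' t)
      ((ν - μ) * (x z * y z)) z :=
    (hx.hasDerivAt_wronskian hy z).congr_deriv (by ring)
  rw [← intervalIntegral.integral_const_mul]
  exact (intervalIntegral.integral_eq_sub_of_hasDerivAt (fun z _ => hderiv z)
    ((continuous_const.mul (hx.continuous.mul hy.continuous)).intervalIntegrable a b)).symm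

lemma sturm_pos_of_potential_lt {a b : ℝ} (hab : a < b) (hx : IsHillSolution U x x')
    (hy : IsHillSolution V y y') (hVU : ∀ z ∈ Ioo a b, V z < U z) (hxa : x a = 0)
    (hx'a : 0 < x' a) (hya : y a = 0) (hpos : ∀ z ∈ Ioo a b, 0 < y z) : 0 < x b := by
  by_contra! hxb
  obtain ⟨s, ⟨has, hsb⟩, hxs, hx's, hxpos⟩ :=
    exists_first_zero hx.hasDerivAt hxa hx'a hab hxb
  have hmono : StrictMonoOn (fun t => x' t * y t - x t * y' t) (Icc a s) := by
    refine strictMonoOn_of_hasDerivWithinAt_pos (convex_Icc a s)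
      (fun z _ => (hx.hasDerivAt_wronskian hy z).continuousAt.continuousWithinAt)
      (fun z _ => (hx.hasDerivAt_wronskian hy z).hasDerivWithinAt) fun z hz => ?_
    rw [interior_Icc] at hz
    have hzb : z ∈ Ioo a b := ⟨hz.1, hz.2.trans_le hsb⟩
    exact mul_pos (sub_pos.2 (hVU z hzb)) (mul_pos (hxpos z hz) (hpos z hzb))
  have hys : 0 ≤ y s :=
    ge_of_tendsto ((hy.continuous.tendsto s).mono_left nhdsWithin_le_nhds) <|
      mem_of_superset (Ioo_mem_nhdsLT has) fun z hz => (hpos z ⟨hz.1, hz.2.trans_le hsb⟩).le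
  have hlt := hmono (left_mem_Icc.2 has.le) (right_mem_Icc.2 has.le) has
  simp only [hxa, hya, hxs, mul_zero, zero_mul, sub_zero] at hlt
  exact hlt.not_ge (mul_nonpos_of_nonpos_of_nonneg hx's hys)

lemma abs_sub_le_gronwallBound {K ε T : ℝ} (hx : IsHillSolution U x x')
    (hy : IsHillSolution V y y') (h0 : x 0 = y 0) (h0' : x' 0 = y' 0)
    (hU : ∀ z ∈ Icc 0 T, |U z| ≤ K) (hUV : ∀ z ∈ Icc 0 T, |(U z - V z) * y z| ≤ ε)
    {z : ℝ} (hz : z ∈ Icc 0 T) :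
    |x z - y z| ≤ gronwallBound 0 (max 1 K) ε z := by
  have hderiv (t : ℝ) : HasDerivAt (fun t => (x t - y t, x' t - y' t))
      (x' t - y' t, U t * x t - V t * y t) t :=
    ((hx.hasDerivAt t).sub (hy.hasDerivAt t)).prodMk
      ((hx.hasDerivAt_deriv t).sub (hy.hasDerivAt_deriv t))
  have hbound : ∀ t ∈ Ico 0 T, ‖(x' t - y' t, U t * x t - V t * y t)‖ ≤
      max 1 K * ‖(x t - y t, x' t - y' t)‖ + ε := by
    intro t ht
    have htT := Ico_subset_Icc_self ht
    have hε : 0 ≤ ε := (abs_nonneg _).trans (hUV t htT)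
    refine max_le ?_ ?_
    · calc ‖x' t - y' t‖ ≤ 1 * ‖(x t - y t, x' t - y' t)‖ := by
            rw [one_mul]; exact le_max_right _ _
        _ ≤ max 1 K * ‖(x t - y t, x' t - y' t)‖ := by gcongr; exact le_max_left _ _
        _ ≤ _ := le_add_of_nonneg_right hε
    · calc |U t * x t - V t * y t| = |U t * (x t - y t) + (U t - V t) * y t| := by ring_nf
        _ ≤ |U t| * |x t - y t| + |(U t - V t) * y t| :=
            (abs_add_le _ _).trans_eq (by rw [abs_mul])
        _ ≤ max 1 K * ‖(x t - y t, x' t - y' t)‖ + ε := by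
            gcongr
            · exact (hU t htT).trans (le_max_right _ _)
            · exact le_max_left _ _
            · exact hUV t htT
  have hgronwall := norm_le_gronwallBound_of_norm_deriv_right_le (δ := 0)
    (fun t _ => (hderiv t).continuousAt.continuousWithinAt)
    (fun t _ => (hderiv t).hasDerivWithinAt) (by simp [h0, h0']) hbound z hz
  rw [sub_zero] at hgronwall
  exact (le_max_left _ _).trans hgronwall

lemma tendstoUniformlyOn {Q : ℝ → ℝ} (hQ : Continuous Q) {y y' : ℝ → ℝ → ℝ}
    (hy : ∀ μ, IsHillSolution (fun z => μ - Q z) (y μ) (y' μ)) {μ₀ : ℝ}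
    (h0 : ∀ μ, y μ 0 = y μ₀ 0) (h0' : ∀ μ, y' μ 0 = y' μ₀ 0) (T : ℝ) :
    TendstoUniformlyOn y (y μ₀) (𝓝 μ₀) (Icc 0 T) := by
  obtain ⟨K, hK⟩ := isCompact_Icc.exists_bound_of_continuousOn (s := Icc 0 T) hQ.continuousOn
  obtain ⟨M, hM⟩ :=
    isCompact_Icc.exists_bound_of_continuousOn (s := Icc 0 T) (hy μ₀).continuous.continuousOn
  have hzero : Tendsto (fun μ => gronwallBound 0 (max 1 (|μ₀| + 1 + K)) (|μ - μ₀| * M) T)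
      (𝓝 μ₀) (𝓝 0) := by
    have hcont : Continuous fun μ : ℝ =>
        gronwallBound 0 (max 1 (|μ₀| + 1 + K)) (|μ - μ₀| * M) T :=
      (gronwallBound_continuous_ε _ _ _).comp (by fun_prop)
    simpa [gronwallBound_ε0_δ0] using hcont.tendsto μ₀
  rw [Metric.tendstoUniformlyOn_iff]
  intro ε hε
  filter_upwards [hzero.eventually_lt_const hε, Metric.ball_mem_nhds μ₀ one_pos]
    with μ hμε hμ z hz
  have hpotential : ∀ t ∈ Icc 0 T, |μ - Q t| ≤ |μ₀| + 1 + K := fun t ht => by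
    have hμ₀ : |μ| ≤ |μ₀| + 1 := by
      linarith [abs_sub_abs_le_abs_sub μ μ₀, mem_ball_iff_norm.1 hμ, Real.norm_eq_abs (μ - μ₀)]
    exact (abs_sub _ _).trans (add_le_add hμ₀ (hK t ht))
  have hforcing : ∀ t ∈ Icc 0 T, |((μ - Q t) - (μ₀ - Q t)) * y μ₀ t| ≤ |μ - μ₀| * M :=
    fun t ht => by
      rw [sub_sub_sub_cancel_right, abs_mul]
      exact mul_le_mul_of_nonneg_left (hM t ht) (abs_nonneg _)
  have hε₀ : 0 ≤ |μ - μ₀| * M := (abs_nonneg _).trans (hforcing z hz)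
  rw [dist_comm]
  calc |y μ z - y μ₀ z| ≤ gronwallBound 0 (max 1 (|μ₀| + 1 + K)) (|μ - μ₀| * M) z :=
        (hy μ).abs_sub_le_gronwallBound (hy μ₀) (h0 μ) (h0' μ) hpotential hforcing hz
    _ ≤ gronwallBound 0 (max 1 (|μ₀| + 1 + K)) (|μ - μ₀| * M) T :=
        gronwallBound_mono le_rfl hε₀ (by positivity) hz.2
    _ < ε := hμε

end IsHillSolution

/-! ### Fundamental matrices of Hill's equation -/

/-- The coefficient matrix of `y'' = V y`, written as a first-order system for `(y, y')`. -/
def hillSystem (V : ℝ → ℝ) (z : ℝ) : Matrix (Fin 2) (Fin 2) ℝ := !![0, 1; V z, 0]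

section Fundamental

variable {V : ℝ → ℝ} {F : ℝ → Matrix (Fin 2) (Fin 2) ℝ}

lemma IsFundamentalR.isHillSolution (hF : IsFundamentalR (hillSystem V) F) (j : Fin 2) :
    IsHillSolution V (fun z => F z 0 j) (fun z => F z 1 j) where
  hasDerivAt z := (hF.1 0 j z).congr_deriv (by simp [hillSystem, Matrix.mul_apply])
  hasDerivAt_deriv z := (hF.1 1 j z).congr_deriv (by simp [hillSystem, Matrix.mul_apply])

lemma IsFundamentalR.det_eq_one (hF : IsFundamentalR (hillSystem V) F) (z : ℝ) :
    (F z).det = 1 := by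
  have hwronskian := (hF.isHillSolution 1).wronskian_eq
    (hF.isHillSolution 0) z 0
  simp only [hF.2, Matrix.one_apply_eq, ne_eq, one_ne_zero, zero_ne_one, not_false_eq_true,
    Matrix.one_apply_ne, mul_one, mul_zero, sub_zero] at hwronskian
  rw [Matrix.det_fin_two]
  linear_combination hwronskian

lemma IsHillSolution.eq_fundamental_combination {y y' : ℝ → ℝ} (hy : IsHillSolution V y y')
    (hF : IsFundamentalR (hillSystem V) F) (z : ℝ) :
    y z = F z 0 0 * y 0 + F z 0 1 * y' 0 ∧ y' z = F z 1 0 * y 0 + F z 1 1 * y' 0 := by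
  have h₀ := hy.wronskian_eq (hF.isHillSolution 0) z 0
  have h₁ := hy.wronskian_eq (hF.isHillSolution 1) z 0
  have hdet := hF.det_eq_one z
  simp only [hF.2, Matrix.one_apply_eq, ne_eq, one_ne_zero, zero_ne_one, not_false_eq_true,
    Matrix.one_apply_ne, mul_one, mul_zero, sub_zero, zero_sub] at h₀ h₁
  rw [Matrix.det_fin_two] at hdet
  constructor
  · linear_combination F z 0 1 * h₀ - F z 0 0 * h₁ - y z * hdet
  · linear_combination F z 1 1 * h₀ - F z 1 0 * h₁ - y' z * hdet

lemma IsFundamentalR.apply_add {P : ℝ} (hF : IsFundamentalR (hillSystem V) F)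
    (hV : Periodic V P) (z : ℝ) : F (z + P) = F z * F P := by
  ext i j
  have hshift := (hF.isHillSolution j).comp_add_const P
  simp only [hV _] at hshift
  obtain ⟨hrow₀, hrow₁⟩ := hshift.eq_fundamental_combination hF z
  fin_cases i
  · simpa [Matrix.mul_apply] using hrow₀
  · simpa [Matrix.mul_apply] using hrow₁

lemma IsFundamentalR.apply_natCast_mul {P : ℝ} (hF : IsFundamentalR (hillSystem V) F)
    (hV : Periodic V P) (n : ℕ) : F (n * P) = F P ^ n := by
  induction n with
  | zero => simp [hF.2]
  | succ n ih =>
    rw [Nat.cast_succ, add_one_mul, hF.apply_add hV, ih, pow_succ]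

end Fundamental

lemma upperUnitriangular_pow {R : Type*} [CommRing R] (b : R) (n : ℕ) :
    !![1, b; 0, 1] ^ n = !![1, n * b; 0, 1] := by
  induction n with
  | zero => simp [Matrix.one_fin_two]
  | succ n ih =>
    rw [pow_succ, ih, Matrix.mul_fin_two]
    simp [add_mul, add_comm]

/-! ### The derivative of the discriminant -/

/-- The difference quotient of the discriminant over `[0, T]` between two values of the spectral
parameter, written through their fundamental matrices `F` and `G`. It involves no division, so
that `G = F` is allowed and gives the derivative. -/
def discriminantSlope (F G : ℝ → Matrix (Fin 2) (Fin 2) ℝ) (T : ℝ) : ℝ :=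
  F T 0 1 * (∫ z in 0..T, G z 0 0 * F z 0 0) - F T 0 0 * (∫ z in 0..T, G z 0 0 * F z 0 1) +
    F T 1 1 * (∫ z in 0..T, G z 0 1 * F z 0 0) - F T 1 0 * (∫ z in 0..T, G z 0 1 * F z 0 1)

lemma trace_sub_trace {Q : ℝ → ℝ} {μ ν : ℝ} {F G : ℝ → Matrix (Fin 2) (Fin 2) ℝ}
    (hF : IsFundamentalR (hillSystem fun z => μ - Q z) F)
    (hG : IsFundamentalR (hillSystem fun z => ν - Q z) G) (T : ℝ) :
    (G T).trace - (F T).trace = (ν - μ) * discriminantSlope F G T := by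
  have hlagrange (i j : Fin 2) := (hG.isHillSolution i).wronskian_sub_wronskian
    (hF.isHillSolution j) 0 T
  have hdet := hF.det_eq_one T
  have h₀₀ := hlagrange 0 0
  have h₀₁ := hlagrange 0 1
  have h₁₀ := hlagrange 1 0
  have h₁₁ := hlagrange 1 1
  simp only [hF.2, hG.2, Matrix.one_apply_eq, ne_eq, one_ne_zero, zero_ne_one, not_false_eq_true,
    Matrix.one_apply_ne, mul_one, mul_zero, sub_zero, zero_sub] at h₀₀ h₀₁ h₁₀ h₁₁
  rw [Matrix.det_fin_two] at hdet
  rw [Matrix.trace_fin_two, Matrix.trace_fin_two, discriminantSlope]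
  linear_combination F T 0 1 * h₀₀ - F T 0 0 * h₀₁ + F T 1 1 * h₁₀ - F T 1 0 * h₁₁ -
    (G T 0 0 + G T 1 1) * hdet

lemma tendstoUniformlyOn_mul_of_norm_le {ι α R : Type*} [NormedRing R] {l : Filter ι} {s : Set α}
    {f : ι → α → R} {g w : α → R} {M : ℝ} (hf : TendstoUniformlyOn f g l s)
    (hw : ∀ z ∈ s, ‖w z‖ ≤ M) :
    TendstoUniformlyOn (fun i z => f i z * w z) (fun z => g z * w z) l s := by
  rw [Metric.tendstoUniformlyOn_iff] at hf ⊢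
  intro ε hε
  have hM : 0 < |M| + 1 := by positivity
  filter_upwards [hf (ε / (|M| + 1)) (div_pos hε hM)] with i hi z hz
  have hiz := hi z hz
  rw [dist_eq_norm, lt_div_iff₀ hM] at hiz
  rw [dist_eq_norm, ← sub_mul]
  refine (norm_mul_le _ _).trans_lt (lt_of_le_of_lt ?_ hiz)
  gcongr
  exact (hw z hz).trans ((le_abs_self M).trans (lt_add_one |M|).le)

section Discriminant

variable {Q : ℝ → ℝ} {F : ℝ → ℝ → Matrix (Fin 2) (Fin 2) ℝ} {T : ℝ}

lemma tendsto_integral_fundamental_mul (hQ : Continuous Q)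
    (hF : ∀ μ, IsFundamentalR (hillSystem fun z => μ - Q z) (F μ)) (hT : 0 ≤ T) (μ₀ : ℝ)
    (i j : Fin 2) :
    Tendsto (fun μ => ∫ z in 0..T, F μ z 0 i * F μ₀ z 0 j) (𝓝 μ₀)
      (𝓝 (∫ z in 0..T, F μ₀ z 0 i * F μ₀ z 0 j)) := by
  have hsol (μ : ℝ) (k : Fin 2) := (hF μ).isHillSolution k
  have hunif := IsHillSolution.tendstoUniformlyOn hQ (fun μ => hsol μ i) (μ₀ := μ₀)
    (fun μ => by rw [(hF μ).2, (hF μ₀).2]) (fun μ => by rw [(hF μ).2, (hF μ₀).2]) T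
  obtain ⟨M, hM⟩ := isCompact_Icc.exists_bound_of_continuousOn (s := Icc 0 T)
    (hsol μ₀ j).continuous.continuousOn
  refine TendstoUniformlyOn.tendsto_intervalIntegral_of_continuousOn
    (Eventually.of_forall fun μ =>
      ((hsol μ i).continuous.mul (hsol μ₀ j).continuous).continuousOn) ?_
  rw [uIcc_of_le hT]
  exact tendstoUniformlyOn_mul_of_norm_le hunif hM

lemma hasDerivAt_trace_fundamental (hQ : Continuous Q)
    (hF : ∀ μ, IsFundamentalR (hillSystem fun z => μ - Q z) (F μ)) (hT : 0 ≤ T) (μ₀ : ℝ) :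
    HasDerivAt (fun μ => (F μ T).trace) (discriminantSlope (F μ₀) (F μ₀) T) μ₀ := by
  have hslope : ∀ μ ∈ ({μ₀}ᶜ : Set ℝ),
      slope (fun μ => (F μ T).trace) μ₀ μ = discriminantSlope (F μ₀) (F μ) T := fun μ hμ => by
    rw [slope_def_field, trace_sub_trace (hF μ₀) (hF μ), mul_div_cancel_left₀ _ (sub_ne_zero.2 hμ)]
  rw [hasDerivAt_iff_tendsto_slope]
  refine Tendsto.congr' (eventually_nhdsWithin_of_forall fun μ hμ => (hslope μ hμ).symm)
    (Tendsto.mono_left ?_ nhdsWithin_le_nhds)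
  have hint := tendsto_integral_fundamental_mul hQ hF hT μ₀
  exact ((((hint 0 0).const_mul _).sub ((hint 0 1).const_mul _)).add
    ((hint 1 0).const_mul _)).sub ((hint 1 1).const_mul _)

end Discriminant

/-! ### The pendulum -/

lemma cos_lt_sinc {x : ℝ} (h0 : 0 < x) (hπ : x < Real.pi) : Real.cos x < Real.sinc x := by
  rw [Real.sinc_of_ne_zero h0.ne', lt_div_iff₀ h0]
  rcases lt_or_ge x (Real.pi / 2) with hlt | hge
  · have hcos : 0 < Real.cos x := Real.cos_pos_of_mem_Ioo ⟨by linarith, hlt⟩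
    have htan := Real.lt_tan h0 hlt
    rwa [Real.tan_eq_sin_div_cos, lt_div_iff₀ hcos, mul_comm] at htan
  · have hcos : Real.cos x ≤ 0 := Real.cos_nonpos_of_pi_div_two_le_of_le hge (by linarith)
    exact (mul_nonpos_of_nonpos_of_nonneg hcos h0.le).trans_lt (Real.sin_pos_of_pos_of_lt_pi h0 hπ)

/-- `g` solves the pendulum equation `g'' = -ω sin g`, with velocity `p`. -/
structure IsPendulumSolution (ω : ℝ) (g p : ℝ → ℝ) : Prop where
  hasDerivAt : ∀ z, HasDerivAt g (p z) z
  hasDerivAt_velocity : ∀ z, HasDerivAt p (-(ω * Real.sin (g z))) z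

namespace IsPendulumSolution

variable {ω : ℝ} {g p h q : ℝ → ℝ}

lemma continuous (hg : IsPendulumSolution ω g p) : Continuous g :=
  continuous_iff_continuousAt.2 fun z => (hg.hasDerivAt z).continuousAt

lemma comp_add_const (hg : IsPendulumSolution ω g p) (a : ℝ) :
    IsPendulumSolution ω (fun z => g (z + a)) (fun z => p (z + a)) where
  hasDerivAt z := (hg.hasDerivAt (z + a)).comp_add_const z a
  hasDerivAt_velocity z := (hg.hasDerivAt_velocity (z + a)).comp_add_const z a

lemma neg (hg : IsPendulumSolution ω g p) : IsPendulumSolution ω (-g) (-p) where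
  hasDerivAt z := (hg.hasDerivAt z).neg
  hasDerivAt_velocity z := (hg.hasDerivAt_velocity z).neg.congr_deriv (by simp)

lemma eq_of_apply_zero (hg : IsPendulumSolution ω g p) (hh : IsPendulumSolution ω h q)
    (h0 : g 0 = h 0) (h0' : p 0 = q 0) : g = h := by
  have hlipschitz : LipschitzWith (max 1 (‖ω‖₊ * (1 * 1)))
      fun x : ℝ × ℝ => (x.2, -(ω * Real.sin x.1)) :=
    LipschitzWith.prod_snd.prodMk
      ((lipschitzWith_smul ω).comp (Real.lipschitzWith_sin.comp LipschitzWith.prod_fst)).neg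
  have hpair := ODE_solution_unique_univ (v := fun _ x => (x.2, -(ω * Real.sin x.1)))
    (s := fun _ => univ) (t₀ := 0) (fun _ => hlipschitz.lipschitzOnWith)
    (fun t => ⟨(hg.hasDerivAt t).prodMk (hg.hasDerivAt_velocity t), mem_univ _⟩)
    (fun t => ⟨(hh.hasDerivAt t).prodMk (hh.hasDerivAt_velocity t), mem_univ _⟩)
    (Prod.ext h0 h0')
  exact funext fun t => congrArg Prod.fst (congrFun hpair t)

lemma energy_eq (hg : IsPendulumSolution ω g p) (z w : ℝ) :
    p z ^ 2 - 2 * ω * Real.cos (g z) = p w ^ 2 - 2 * ω * Real.cos (g w) := by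
  have hderiv (t : ℝ) : HasDerivAt (fun t => p t ^ 2 - 2 * ω * Real.cos (g t)) 0 t :=
    (((hg.hasDerivAt_velocity t).pow 2).sub ((hg.hasDerivAt t).cos.const_mul (2 * ω))).congr_deriv
      (by ring)
  exact is_const_of_deriv_eq_zero (fun t => (hderiv t).differentiableAt)
    (fun t => (hderiv t).deriv) z w

lemma isHillSolution_velocity (hg : IsPendulumSolution ω g p) :
    IsHillSolution (fun z => -(ω * Real.cos (g z))) p (fun z => -(ω * Real.sin (g z))) where
  hasDerivAt := hg.hasDerivAt_velocity
  hasDerivAt_deriv z := (((hg.hasDerivAt z).sin.const_mul ω).neg).congr_deriv (by ring)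

lemma isHillSolution (hg : IsPendulumSolution ω g p) :
    IsHillSolution (fun z => -(ω * Real.sinc (g z))) g p where
  hasDerivAt := hg.hasDerivAt
  hasDerivAt_deriv z := (hg.hasDerivAt_velocity z).congr_deriv <| by
    rcases eq_or_ne (g z) 0 with hz | hz
    · simp [hz]
    · rw [Real.sinc_of_ne_zero hz]
      field_simp

lemma antiperiodic {s : ℝ} (hg : IsPendulumSolution ω g p) (h0 : g 0 = 0) (hgs : g s = 0)
    (hps : p s = -p 0) : Antiperiodic g s :=
  congrFun <| (hg.comp_add_const s).eq_of_apply_zero hg.neg (by simp [h0, hgs]) (by simp [hps])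

lemma velocity_apply_add {P : ℝ} (hg : IsPendulumSolution ω g p) (hP : Periodic g P) (z : ℝ) :
    p (z + P) = p z := by
  have hshift := (hg.comp_add_const P).hasDerivAt z
  simp only [hP _] at hshift
  exact hshift.unique (hg.hasDerivAt z)

end IsPendulumSolution

/-- A pendulum swinging without reaching the upright position, observed from a passage through its
lowest position. -/
structure IsLibration (ω : ℝ) (g p : ℝ → ℝ) : Prop extends IsPendulumSolution ω g p where
  pos : 0 < ω
  apply_zero : g 0 = 0
  velocity_pos : 0 < p 0
  neg_one_lt_cos : ∀ z, -1 < Real.cos (g z)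

/-- `s` is the first positive time at which `g` vanishes, and the velocity is reversed there: half
the period of a libration `g` with velocity `p`. -/
structure IsHalfPeriod (g p : ℝ → ℝ) (s : ℝ) : Prop where
  pos : 0 < s
  apply_eq_zero : g s = 0
  velocity_eq_neg : p s = -p 0
  apply_pos : ∀ z ∈ Ioo 0 s, 0 < g z

namespace IsLibration

variable {ω s : ℝ} {g p : ℝ → ℝ} {F : ℝ → Matrix (Fin 2) (Fin 2) ℝ}

lemma lt_pi (hg : IsLibration ω g p) (z : ℝ) : g z < Real.pi := by
  by_contra! hz
  obtain ⟨w, hw⟩ := intermediate_value_univ 0 z hg.continuous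
    ⟨hg.apply_zero.trans_le Real.pi_pos.le, hz⟩
  have hcos := hg.neg_one_lt_cos w
  rw [hw, Real.cos_pi] at hcos
  exact hcos.false

lemma exists_isHalfPeriod {T : ℝ} (hg : IsLibration ω g p) (hT : 0 < T) (hgT : g T = 0) :
    ∃ s, IsHalfPeriod g p s := by
  obtain ⟨s, ⟨hs, -⟩, hgs, hps, hpos⟩ :=
    exists_first_zero hg.hasDerivAt hg.apply_zero hg.velocity_pos hT hgT.le
  have henergy := hg.energy_eq s 0
  rw [hgs, hg.apply_zero, sub_left_inj] at henergy
  have hps_ne : p s ≠ p 0 := (hps.trans_lt hg.velocity_pos).ne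
  exact ⟨s, hs, hgs, (sq_eq_sq_iff_eq_or_eq_neg.1 henergy).resolve_left hps_ne, hpos⟩

lemma eq_natCast_mul_of_periodic {T : ℝ} (hg : IsLibration ω g p) (hs : IsHalfPeriod g p s)
    (hT : 0 < T) (hper : Periodic g T) :
    ∃ n : ℕ, 0 < n ∧ T = n * (2 * s) := by
  have hs_pos := hs.pos
  have hanti := hg.antiperiodic hg.apply_zero hs.apply_eq_zero hs.velocity_eq_neg
  set n := ⌊T / (2 * s)⌋₊
  set r := T - n * (2 * s)
  have hn_le : n * (2 * s) ≤ T := by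
    rw [← le_div_iff₀ (by positivity)]; exact Nat.floor_le (by positivity)
  have hr_lt : r < 2 * s := by
    have := (div_lt_iff₀ (by positivity)).1 (Nat.lt_floor_add_one (T / (2 * s)))
    linarith
  have hr_period : Periodic g r := hper.sub_period (hanti.periodic_two_mul.nat_mul n)
  have hgr : g r = 0 := by rw [← zero_add r, hr_period, hg.apply_zero]
  have hpr : p r = p 0 := by rw [← zero_add r, hg.velocity_apply_add hr_period]
  have hr_zero : r = 0 := by
    rcases (sub_nonneg.2 hn_le).eq_or_lt with h0r | h0r
    · exact h0r.symm
    rcases lt_trichotomy r s with hrs | hrs | hrs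
    · exact absurd hgr (hs.apply_pos r ⟨h0r, hrs⟩).ne'
    · rw [hrs, hs.velocity_eq_neg] at hpr
      linarith [hg.velocity_pos]
    · have hreflect := hs.apply_pos (r - s) ⟨sub_pos.2 hrs, by linarith⟩
      rw [hanti.sub_eq, hgr, neg_zero] at hreflect
      exact absurd hreflect (lt_irrefl 0)
  have hTn : T = n * (2 * s) := sub_eq_zero.1 hr_zero
  refine ⟨n, Nat.pos_of_ne_zero fun hn => ?_, hTn⟩
  rw [hn, Nat.cast_zero, zero_mul] at hTn
  exact hT.ne' hTn

lemma exists_fundamental_half_period_eq (hg : IsLibration ω g p) (hs : IsHalfPeriod g p s)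
    (hF : IsFundamentalR (hillSystem fun z => -(ω * Real.cos (g z))) F) :
    ∃ w > 0, F s = !![-1, w; 0, -1] := by
  have hw : 0 < F s 0 1 := by
    refine (hF.isHillSolution 1).sturm_pos_of_potential_lt hs.pos hg.isHillSolution (fun z hz => ?_)
      (by simp [hF.2]) (by simp [hF.2]) hg.apply_zero hs.apply_pos
    exact neg_lt_neg (mul_lt_mul_of_pos_left (cos_lt_sinc (hs.apply_pos z hz) (hg.lt_pi z)) hg.pos)
  obtain ⟨hp_s, hp's⟩ := hg.isHillSolution_velocity.eq_fundamental_combination hF s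
  simp only [hs.apply_eq_zero, hs.velocity_eq_neg, hg.apply_zero, Real.sin_zero, mul_zero,
    neg_zero, add_zero] at hp_s hp's
  have h₀₀ : F s 0 0 = -1 := mul_right_cancel₀ hg.velocity_pos.ne' (by linarith)
  have h₁₀ : F s 1 0 = 0 := (mul_eq_zero.1 hp's.symm).resolve_right hg.velocity_pos.ne'
  have h₁₁ : F s 1 1 = -1 := by
    have hdet := hF.det_eq_one s
    rw [Matrix.det_fin_two, h₀₀, h₁₀] at hdet
    linarith
  exact ⟨F s 0 1, hw, by rw [Matrix.eta_fin_two (F s), h₀₀, h₁₀, h₁₁]; rfl⟩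

lemma exists_monodromy_eq {T : ℝ} (hg : IsLibration ω g p) (hT : 0 < T) (hper : Periodic g T)
    (hF : IsFundamentalR (hillSystem fun z => -(ω * Real.cos (g z))) F) :
    ∃ β < 0, F T = !![1, β; 0, 1] := by
  have hgT : g T = 0 := by rw [← zero_add T, hper, hg.apply_zero]
  obtain ⟨s, hs⟩ := hg.exists_isHalfPeriod hT hgT
  obtain ⟨n, hn, rfl⟩ := hg.eq_natCast_mul_of_periodic hs hT hper
  obtain ⟨w, hw, hFs⟩ := hg.exists_fundamental_half_period_eq hs hF
  have hanti := hg.antiperiodic hg.apply_zero hs.apply_eq_zero hs.velocity_eq_neg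
  have hV : Periodic (fun z => -(ω * Real.cos (g z))) s := fun z => by
    simp only [hanti z, Real.cos_neg]
  have hF2s : F (2 * s) = !![1, -(2 * w); 0, 1] := by
    rw [two_mul, hF.apply_add hV, hFs, Matrix.mul_fin_two]
    norm_num [two_mul]
  refine ⟨n * -(2 * w), mul_neg_of_pos_of_neg (by positivity) (by linarith), ?_⟩
  rw [hF.apply_natCast_mul (by simpa using hV.nat_mul 2), hF2s, upperUnitriangular_pow]

lemma exists_hasDerivAt_trace_neg {T : ℝ} {F : ℝ → ℝ → Matrix (Fin 2) (Fin 2) ℝ}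
    (hg : IsLibration ω g p) (hT : 0 < T) (hper : Periodic g T)
    (hF : ∀ μ, IsFundamentalR (hillSystem fun z => μ - ω * Real.cos (g z)) (F μ)) :
    ∃ d < 0, HasDerivAt (fun μ => (F μ T).trace) d 0 := by
  obtain ⟨β, hβ, hFT⟩ := hg.exists_monodromy_eq hT hper (by simpa only [zero_sub] using hF 0)
  have hcos : Continuous fun z => ω * Real.cos (g z) := by
    have := hg.continuous
    fun_prop
  have hsol := (hF 0).isHillSolution 0
  have hint : 0 < ∫ z in 0..T, F 0 z 0 0 * F 0 z 0 0 :=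
    intervalIntegral.integral_pos hT (hsol.continuous.mul hsol.continuous).continuousOn
      (fun z _ => mul_self_nonneg _) ⟨0, left_mem_Icc.2 hT.le, by simp [(hF 0).2]⟩
  have hslope : discriminantSlope (F 0) (F 0) T = β * ∫ z in 0..T, F 0 z 0 0 * F 0 z 0 0 := by
    simp only [discriminantSlope, hFT, Matrix.of_apply, Matrix.cons_val', Matrix.cons_val_zero,
      Matrix.cons_val_one, mul_comm (F 0 _ 0 1)]
    ring
  exact ⟨_, hslope ▸ mul_neg_of_neg_of_pos hβ hint, hasDerivAt_trace_fundamental hcos hF hT.le 0⟩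

end IsLibration

/-! ### Librational waves -/

lemma sin_eq_cos_mul_sin_sub {a : ℝ} (ha : Real.sin a = 0) (x : ℝ) :
    Real.sin x = Real.cos a * Real.sin (x - a) := by
  conv_lhs => rw [← sub_add_cancel x a, Real.sin_add, ha, mul_zero, add_zero, mul_comm]

lemma cos_eq_cos_mul_cos_sub {a : ℝ} (ha : Real.sin a = 0) (x : ℝ) :
    Real.cos x = Real.cos a * Real.cos (x - a) := by
  conv_lhs => rw [← sub_add_cancel x a, Real.cos_add, ha, mul_zero, sub_zero, mul_comm]

lemma isLibration_sub_apply_zero {m E : ℝ} {f : ℝ → ℝ} (hE0 : 0 < E) (hE2 : E < 2)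
    (hf : ContDiff ℝ 2 f) (hpend : ∀ z, m * deriv (deriv f) z + Real.sin (f z) = 0)
    (henergy : ∀ z, 1 / 2 * m * deriv f z ^ 2 + 1 - Real.cos (f z) = E)
    (hsin0 : Real.sin (f 0) = 0) (hf'0 : 0 < deriv f 0) :
    IsLibration (1 / m * Real.cos (f 0)) (fun z => f z - f 0) (deriv f) := by
  set κ := Real.cos (f 0)
  have hκ_abs : |κ| = 1 := (abs_eq zero_le_one).2 (Real.sin_eq_zero_iff_cos_eq.1 hsin0)
  have hκE : |κ * (1 - E)| < 1 := by
    rw [abs_mul, hκ_abs, one_mul, abs_lt]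
    constructor <;> linarith
  have hcos (z : ℝ) :
      Real.cos (f z - f 0) = 1 / 2 * (κ * m) * deriv f z ^ 2 + κ * (1 - E) := by
    have hκ_sq : κ ^ 2 = 1 := by rw [← sq_abs, hκ_abs, one_pow]
    linear_combination -κ * henergy z - Real.cos (f z - f 0) * hκ_sq -
      κ * cos_eq_cos_mul_cos_sub hsin0 (f z)
  have hκm : 0 < κ * m := by
    have hcos₀ := hcos 0
    rw [sub_self, Real.cos_zero] at hcos₀
    have : 0 < κ * m * deriv f 0 ^ 2 := by linarith [(abs_lt.1 hκE).2]
    exact pos_of_mul_pos_left this (sq_nonneg _)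
  have hm : m ≠ 0 := right_ne_zero_of_mul hκm.ne'
  refine ⟨⟨fun z => ?_, fun z => ?_⟩, ?_, sub_self _, hf'0, fun z => ?_⟩
  · exact ((hf.differentiable two_ne_zero) z).hasDerivAt.sub_const _
  · refine (hf.differentiable_deriv_two z).hasDerivAt.congr_deriv ?_
    have hpend_z := hpend z
    rw [sin_eq_cos_mul_sin_sub hsin0] at hpend_z
    field_simp
    linear_combination hpend_z
  · rw [one_div_mul_eq_div, ← mul_div_mul_right κ m hm]
    exact div_pos hκm (mul_self_pos.2 hm)
  · rw [hcos]
    have : 0 ≤ 1 / 2 * (κ * m) * deriv f z ^ 2 := by positivity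
    linarith [(abs_lt.1 hκE).1]

theorem stmt15_general (m E T : ℝ) (hE0 : 0 < E) (hE2 : E < 2)
    (f : ℝ → ℝ) (hf : ContDiff ℝ 2 f)
    (hpend : ∀ z : ℝ, m * deriv (deriv f) z + Real.sin (f z) = 0)
    (henergy : ∀ z : ℝ, (1 / 2) * m * (deriv f z) ^ 2 + 1 - Real.cos (f z) = E)
    (hT : 0 < T) (hper : Periodic f T)
    (hsin0 : Real.sin (f 0) = 0) (hf'0 : 0 < deriv f 0)
    (F : ℝ → ℝ → Matrix (Fin 2) (Fin 2) ℝ)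
    (hF : ∀ μ : ℝ, IsFundamentalR
      (fun z : ℝ => !![0, 1; μ - 1 / m * Real.cos (f z), 0]) (F μ)) :
    ∃ d < 0, HasDerivAt (fun μ : ℝ => Matrix.trace (F μ T)) d 0 := by
  have hg := isLibration_sub_apply_zero hE0 hE2 hf hpend henergy hsin0 hf'0
  have hpotential (z : ℝ) :
      1 / m * Real.cos (f 0) * Real.cos (f z - f 0) = 1 / m * Real.cos (f z) := by
    rw [mul_assoc, ← cos_eq_cos_mul_cos_sub hsin0]
  refine hg.exists_hasDerivAt_trace_neg hT (fun z => congrArg (· - f 0) (hper z)) fun μ => ?_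
  simp only [hpotential]
  exact hF μ

/-- For a librational wave, the Hill discriminant `Δ_q(μ) = tr F_μ(T)` has strictly
negative derivative at `μ = 0`: i.e. `μ = 0` is the periodic eigenvalue `μ₁⁽⁰⁾`. -/
theorem stmt15 (c E γ T : ℝ) (hc : c ^ 2 ≠ 1) (hγ : γ = 1 / (c ^ 2 - 1))
    (hE0 : 0 < E) (hE2 : E < 2)
    (f : ℝ → ℝ) (hf : ContDiff ℝ 2 f)
    (hpend : ∀ z : ℝ, (c ^ 2 - 1) * deriv (deriv f) z + Real.sin (f z) = 0)
    (henergy : ∀ z : ℝ, (1 / 2) * (c ^ 2 - 1) * (deriv f z) ^ 2 + 1 - Real.cos (f z) = E)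
    (hT : IsLeast {S : ℝ | 0 < S ∧ ∀ z : ℝ, f (z + S) = f z} T)
    (hsin0 : Real.sin (f 0) = 0) (hf'0 : 0 < deriv f 0)
    (F : ℝ → ℝ → Matrix (Fin 2) (Fin 2) ℝ)
    (hF : ∀ μ : ℝ, IsFundamentalR
      (fun z : ℝ => !![0, 1; μ - γ * Real.cos (f z), 0]) (F μ))
    (d : ℝ) (hd : HasDerivAt (fun μ : ℝ => Matrix.trace (F μ T)) d 0) :
    d < 0 := by
  subst hγ
  obtain ⟨d', hd'_neg, hd'⟩ :=
    stmt15_general (c ^ 2 - 1) E T hE0 hE2 f hf hpend henergy hT.1.1 hT.1.2 hsin0 hf'0 F hF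
  exact hd.unique hd' ▸ hd'_neg
end
end

section
/- Define P : (0, 2) → ℝ by P(E) := 2·∫₀¹ du / (√u · √(−E(u − 1)² − 2(u − 1))) (the integrand is positive on (0,1) since −E(u−1)² − 2(u−1) = (1 − u)(2 − E(1 − u)) > 0 for 0 < u < 1 and 0 < E < 2, and the improper integral converges). Then P is strictly increasing on (0, 2): for all E₁, E₂ with 0 < E₁ < E₂ < 2 one has P(E₁) < P(E₂). -/
noncomputable section

/-- The normalized period function of librational traveling waves:
`P(E) = 2∫₀¹ du / (√u · √(−E(u−1)² − 2(u−1)))`. -/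
def periodP (E : ℝ) : ℝ :=
  2 * ∫ u in (0:ℝ)..1,
    1 / (Real.sqrt u * Real.sqrt (-E * (u - 1) ^ 2 - 2 * (u - 1)))

/-!
The radicand factors as `-E(u - 1)² - 2(u - 1) = (1 - u)(2 - E(1 - u))`, so the integrand is the
Beta weight `u^(-1/2) (1 - u)^(-1/2)`, integrable and independent of `E`, times
`1 / √(2 - E(1 - u))`. For `E < 2` the latter is continuous in `u ∈ [0, 1]`, so the integral
converges, and it is strictly increasing in `E` for each `u < 1`; hence so is the integral.
-/

open MeasureTheory Set

theorem strictMonoOn_intervalIntegral {ι : Type*} [Preorder ι] {f : ι → ℝ → ℝ} {s : Set ι}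
    {a b : ℝ} (hab : a < b) (hint : ∀ i ∈ s, IntervalIntegrable (f i) volume a b)
    (hmono : ∀ x ∈ Ioo a b, StrictMonoOn (fun i => f i x) s) :
    StrictMonoOn (fun i => ∫ x in a..b, f i x) s := by
  intro i hi j hj hij
  rw [← sub_pos, ← intervalIntegral.integral_sub (hint j hj) (hint i hi)]
  exact intervalIntegral.intervalIntegral_pos_of_pos_on ((hint j hj).sub (hint i hi))
    (fun x hx => sub_pos.2 (hmono x hx hi hj hij)) hab

theorem intervalIntegrable_rpow_mul_one_sub_rpow {a b : ℝ} (ha : -1 < a) (hb : -1 < b) :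
    IntervalIntegrable (fun x : ℝ => x ^ a * (1 - x) ^ b) volume 0 1 := by
  have hbeta := (Complex.betaIntegral_convergent (u := (a + 1 : ℝ)) (v := (b + 1 : ℝ))
    (by simp only [Complex.ofReal_re]; linarith) (by simp only [Complex.ofReal_re]; linarith)).norm
  rw [intervalIntegrable_iff_integrableOn_Ioo_of_le zero_le_one] at hbeta ⊢
  refine hbeta.congr_fun (fun x ⟨hx₀, hx₁⟩ => ?_) measurableSet_Ioo
  have hnorm {y : ℝ} (hy : 0 < y) (c : ℝ) : ‖(y : ℂ) ^ (((c + 1 : ℝ) : ℂ) - 1)‖ = y ^ c := by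
    simp [Complex.norm_cpow_eq_rpow_re_of_pos hy]
  have hone_sub : (1 : ℂ) - x = ((1 - x : ℝ) : ℂ) := by simp
  simp only [norm_mul, hone_sub, hnorm hx₀, hnorm (sub_pos.2 hx₁)]

/-- The integrand of `periodP`, named so that its integrability and its monotonicity in the energy
can be stated separately. -/
def periodIntegrand (E u : ℝ) : ℝ :=
  1 / (√u * √(-E * (u - 1) ^ 2 - 2 * (u - 1)))

theorem periodIntegrand_eq_rpow_mul {u : ℝ} (hu : u ∈ Icc (0 : ℝ) 1) (E : ℝ) :
    periodIntegrand E u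
      = u ^ (-(1 / 2) : ℝ) * (1 - u) ^ (-(1 / 2) : ℝ) * (√(2 - E * (1 - u)))⁻¹ := by
  have hu' : 0 ≤ 1 - u := sub_nonneg.2 hu.2
  have hfactor : -E * (u - 1) ^ 2 - 2 * (u - 1) = (1 - u) * (2 - E * (1 - u)) := by ring
  rw [periodIntegrand, hfactor, Real.sqrt_mul hu', Real.rpow_neg hu.1, Real.rpow_neg hu',
    ← Real.sqrt_eq_rpow, ← Real.sqrt_eq_rpow, one_div, mul_inv, mul_inv, mul_assoc]

theorem two_sub_mul_one_sub_pos {E u : ℝ} (hE : E < 2) (hu : u ∈ Icc (0 : ℝ) 1) :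
    0 < 2 - E * (1 - u) := by
  have hconvex : 2 - E * (1 - u) = u * 2 + (1 - u) * (2 - E) := by ring
  rw [hconvex]
  obtain rfl | hu₀ := hu.1.eq_or_lt
  · linarith
  · exact add_pos_of_pos_of_nonneg (by positivity)
      (mul_nonneg (sub_nonneg.2 hu.2) (sub_pos.2 hE).le)

theorem intervalIntegrable_periodIntegrand {E : ℝ} (hE : E < 2) :
    IntervalIntegrable (periodIntegrand E) volume 0 1 := by
  have hcont : ContinuousOn (fun u : ℝ => (√(2 - E * (1 - u)))⁻¹) (uIcc 0 1) := by
    rw [uIcc_of_le zero_le_one]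
    exact ContinuousOn.inv₀ (by fun_prop) fun u hu =>
      (Real.sqrt_pos.2 (two_sub_mul_one_sub_pos hE hu)).ne'
  have hweight := intervalIntegrable_rpow_mul_one_sub_rpow (a := -(1 / 2)) (b := -(1 / 2))
    (by norm_num) (by norm_num)
  refine (hweight.mul_continuousOn hcont).congr fun u hu => ?_
  rw [uIoc_of_le zero_le_one] at hu
  exact (periodIntegrand_eq_rpow_mul (Ioc_subset_Icc_self hu) E).symm

theorem strictMonoOn_periodIntegrand {u : ℝ} (hu : u ∈ Ioo (0 : ℝ) 1) :
    StrictMonoOn (fun E => periodIntegrand E u) (Iio 2) := by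
  intro E₁ _ E₂ hE₂ hlt
  have hu' : 0 < 1 - u := sub_pos.2 hu.2
  have hweight : 0 < u ^ (-(1 / 2) : ℝ) * (1 - u) ^ (-(1 / 2) : ℝ) :=
    mul_pos (Real.rpow_pos_of_pos hu.1 _) (Real.rpow_pos_of_pos hu' _)
  have hpos : 0 < 2 - E₂ * (1 - u) := two_sub_mul_one_sub_pos hE₂ (Ioo_subset_Icc_self hu)
  simp only [periodIntegrand_eq_rpow_mul (Ioo_subset_Icc_self hu)]
  gcongr

theorem stmt17_general : StrictMonoOn periodP (Iio 2) := by
  have hintegral : StrictMonoOn (fun E => ∫ u in (0 : ℝ)..1, periodIntegrand E u) (Iio 2) :=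
    strictMonoOn_intervalIntegral zero_lt_one (fun _ => intervalIntegrable_periodIntegrand)
      fun _ => strictMonoOn_periodIntegrand
  exact fun _ hE₁ _ hE₂ hlt => mul_lt_mul_of_pos_left (hintegral hE₁ hE₂ hlt) two_pos

/-- The period function `P` is strictly increasing on `(0, 2)`. -/
theorem stmt17 :
    ∀ E₁ E₂ : ℝ, 0 < E₁ → E₁ < E₂ → E₂ < 2 → periodP E₁ < periodP E₂ :=
  fun _ _ _ hlt hE₂ => stmt17_general (hlt.trans hE₂) hE₂ hlt
end
end
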